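/- (Continuous dependence for mild solutions.) Under the hypotheses of the abstract local existence theorem (Banach spaces X, Y, continuous linear J : X → Y, operator family S(t) : Y → X with the semigroup law S(t) ∘ J ∘ S(s) = S(t+s), the contraction bound ‖S(t)(Jx)‖_X ≤ ‖x‖_X, the smoothing bound ‖S(t)‖_{L(Y,X)} ≤ C t^{−3/4} for 0 < t ≤ 1, strong continuity at t = 0, and F : X → Y Lipschitz on bounded sets with constant K(R)), for every R > 0 there exist T > 0 and c ≥ 1 such that any two continuous maps u₁, u₂ : [0, T] → X satisfying the mild equation u_i(t) = S(t)(J u_i(0)) + ∫₀ᵗ S(t−s)(F(u_i(s))) ds with ‖u₁(0)‖_X ≤ R and ‖u₂(0)‖_X ≤ R obey max_{0 ≤ t ≤ T} ‖u₁(t) − u₂(t)‖_X ≤ c‖u₁(0) − u₂(0)‖_X. -/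

import Mathlib

/-!
The map `s ↦ S (t - s) (g s)` is continuous on `[0, t)` for continuous `g`: writing
`S (t - s) = S (t - s - δ) ∘ J ∘ S δ`, the operators `S τ ∘ J` are contractions and strongly
continuous in `τ > 0`. Together with the smoothing bound, whose singularity `(t - s)^(-3/4)` is
integrable with integral `4 t^(1/4)`, this makes every Duhamel integral with forcing bounded by
`B` converge and have norm at most `4 C B t^(1/4)` (`norm_duhamel_le`).

For `T` small this has two consequences. First, a solution starting in the ball of radius `R`
stays in the ball of radius `R + 1` on `[0, T]`: at the first time its norm reached `R + 1`, the
integral bound would give norm at most `R + 1/2` (`norm_mild_le`). Secondly, with `D` the maximum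
of `‖u₁ - u₂‖` on `[0, T]`, the Lipschitz bound on that ball gives
`D ≤ ‖u₁ 0 - u₂ 0‖ + D / 2`, so `c = 2` works.
-/

open MeasureTheory intervalIntegral Set Filter Topology

lemma continuous_of_lipschitz_on_bounded {X Y : Type*} [NormedAddCommGroup X]
    [NormedAddCommGroup Y] {F : X → Y}
    (hF : ∀ R : ℝ, 0 < R → ∃ K : ℝ, 0 < K ∧ ∀ x₁ x₂ : X,
      ‖x₁‖ ≤ R → ‖x₂‖ ≤ R → ‖F x₁ - F x₂‖ ≤ K * ‖x₁ - x₂‖) : Continuous F := by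
  rw [continuous_iff_continuousAt]
  intro x
  obtain ⟨K, hK, h⟩ := hF (‖x‖ + 1) (by positivity)
  refine continuousAt_of_locally_lipschitz one_pos K fun y hy => ?_
  rw [dist_eq_norm] at hy
  rw [dist_eq_norm, dist_eq_norm]
  refine h y x ?_ (by linarith)
  linarith [norm_le_norm_add_norm_sub' y x]

section

variable {X Y : Type*} [NormedAddCommGroup X] [NormedSpace ℝ X]
  [NormedAddCommGroup Y] [NormedSpace ℝ Y]

lemma continuousOn_duhamel_integrand (J : X →L[ℝ] Y) (S : ℝ → Y →L[ℝ] X)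
    (hsemi : ∀ s t : ℝ, 0 < s → 0 < t → ∀ y : Y, S t (J (S s y)) = S (t + s) y)
    (hcontr : ∀ t : ℝ, 0 < t → ∀ x : X, ‖S t (J x)‖ ≤ ‖x‖)
    (hcont : ∀ x : X, ContinuousOn (fun t => S t (J x)) (Ioi (0 : ℝ)))
    {t : ℝ} {g : ℝ → Y} (hg : ContinuousOn g (Ico 0 t)) :
    ContinuousOn (fun s => S (t - s) (g s)) (Ico 0 t) := by
  intro s₀ hs₀
  obtain ⟨δ, hδ, hδt⟩ : ∃ δ, 0 < δ ∧ s₀ < t - δ :=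
    ⟨(t - s₀) / 2, by linarith [hs₀.2], by linarith [hs₀.2]⟩
  have hlt : ∀ᶠ s in 𝓝[Ico 0 t] s₀, s < t - δ :=
    nhdsWithin_le_nhds (Iio_mem_nhds hδt)
  have hw : Tendsto (fun s => S δ (g s)) (𝓝[Ico 0 t] s₀) (𝓝 (S δ (g s₀))) :=
    ((S δ).continuous.tendsto _).comp (hg s₀ hs₀)
  have hfix : Tendsto (fun s => S (t - s - δ) (J (S δ (g s₀)))) (𝓝[Ico 0 t] s₀)
      (𝓝 (S (t - s₀ - δ) (J (S δ (g s₀))))) := by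
    have h1 : ContinuousAt (fun τ => S τ (J (S δ (g s₀)))) (t - s₀ - δ) :=
      (hcont _).continuousAt (Ioi_mem_nhds (by linarith))
    have h2 : Tendsto (fun s : ℝ => t - s - δ) (𝓝 s₀) (𝓝 (t - s₀ - δ)) :=
      Continuous.tendsto (f := fun s : ℝ => t - s - δ) (by fun_prop) s₀
    exact (h1.tendsto.comp h2).mono_left nhdsWithin_le_nhds
  have hdiff : Tendsto (fun s => S (t - s - δ) (J (S δ (g s) - S δ (g s₀))))
      (𝓝[Ico 0 t] s₀) (𝓝 0) := by
    refine squeeze_zero_norm' ?_ (tendsto_iff_norm_sub_tendsto_zero.1 hw)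
    filter_upwards [hlt] with s hs
    exact hcontr _ (by linarith) _
  have hsum := hdiff.add hfix
  rw [zero_add, hsemi δ (t - s₀ - δ) hδ (by linarith), sub_add_cancel] at hsum
  refine hsum.congr' ?_
  filter_upwards [hlt] with s hs
  rw [← map_add, ← map_add, sub_add_cancel, hsemi δ (t - s - δ) hδ (by linarith),
    sub_add_cancel]

lemma intervalIntegrable_kernel (t : ℝ) :
    IntervalIntegrable (fun s : ℝ => (t - s) ^ (-(3 / 4 : ℝ))) volume 0 t := by
  have h := (intervalIntegrable_rpow' (a := 0) (b := t)
    (r := -(3 / 4 : ℝ)) (by norm_num)).comp_sub_left t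
  simpa using h.symm

lemma integral_kernel (t : ℝ) :
    ∫ s in (0 : ℝ)..t, (t - s) ^ (-(3 / 4 : ℝ)) = 4 * t ^ (1 / 4 : ℝ) := by
  rw [intervalIntegral.integral_comp_sub_left (fun x : ℝ => x ^ (-(3 / 4 : ℝ))) t,
    integral_rpow (Or.inl (by norm_num))]
  norm_num
  ring

/-- Convergence of the Duhamel integral, and its smallness for short times, for a continuous
forcing term bounded by `B`. -/
lemma norm_duhamel_le (J : X →L[ℝ] Y) (S : ℝ → Y →L[ℝ] X)
    (hsemi : ∀ s t : ℝ, 0 < s → 0 < t → ∀ y : Y, S t (J (S s y)) = S (t + s) y)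
    (hcontr : ∀ t : ℝ, 0 < t → ∀ x : X, ‖S t (J x)‖ ≤ ‖x‖)
    (hcont : ∀ x : X, ContinuousOn (fun t => S t (J x)) (Ioi (0 : ℝ)))
    {C : ℝ} (hC : 0 < C)
    (hsmooth : ∀ t : ℝ, 0 < t → t ≤ 1 → ‖S t‖ ≤ C * t ^ (-(3 / 4 : ℝ)))
    {t : ℝ} (ht0 : 0 < t) (ht1 : t ≤ 1) {g : ℝ → Y} (hg : ContinuousOn g (Ico 0 t))
    {B : ℝ} (hB : ∀ s ∈ Ico 0 t, ‖g s‖ ≤ B) :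
    IntervalIntegrable (fun s => S (t - s) (g s)) volume 0 t ∧
      ‖∫ s in (0 : ℝ)..t, S (t - s) (g s)‖ ≤ C * B * (4 * t ^ (1 / 4 : ℝ)) := by
  have hbound : ∀ s ∈ Ico 0 t,
      ‖S (t - s) (g s)‖ ≤ C * B * (t - s) ^ (-(3 / 4 : ℝ)) := by
    intro s hs
    have hs' : 0 < t - s := by linarith [hs.2]
    calc ‖S (t - s) (g s)‖ ≤ ‖S (t - s)‖ * ‖g s‖ := (S (t - s)).le_opNorm _
      _ ≤ (C * (t - s) ^ (-(3 / 4 : ℝ))) * B := by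
          gcongr
          · exact hsmooth _ hs' (by linarith [hs.1])
          · exact hB s hs
      _ = _ := by ring
  have hae : ∀ᵐ s ∂volume, s ∈ Ioc 0 t →
      ‖S (t - s) (g s)‖ ≤ C * B * (t - s) ^ (-(3 / 4 : ℝ)) := by
    filter_upwards [compl_mem_ae_iff.2 (measure_singleton t)] with s hs hst
    exact hbound s ⟨hst.1.le, lt_of_le_of_ne hst.2 hs⟩
  have hker := (intervalIntegrable_kernel t).const_mul (C * B)
  refine ⟨hker.mono_fun' ?_ ?_, ?_⟩
  · rw [uIoc_of_le ht0.le, ← restrict_Ico_eq_restrict_Ioc]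
    exact (continuousOn_duhamel_integrand J S hsemi hcontr hcont hg).aestronglyMeasurable
      measurableSet_Ico
  · rw [uIoc_of_le ht0.le]
    exact (ae_restrict_iff' measurableSet_Ioc).2 hae
  · calc _ ≤ ∫ s in (0 : ℝ)..t, C * B * (t - s) ^ (-(3 / 4 : ℝ)) :=
          norm_integral_le_of_norm_le ht0.le hae hker
      _ = _ := by rw [intervalIntegral.integral_const_mul, integral_kernel]

/-- A priori bound: on a short time interval a mild solution starting in the ball of radius `R`
does not leave the ball of radius `R + 1`. -/
lemma norm_mild_le (J : X →L[ℝ] Y) (S : ℝ → Y →L[ℝ] X)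
    (hsemi : ∀ s t : ℝ, 0 < s → 0 < t → ∀ y : Y, S t (J (S s y)) = S (t + s) y)
    (hcontr : ∀ t : ℝ, 0 < t → ∀ x : X, ‖S t (J x)‖ ≤ ‖x‖)
    (hcont : ∀ x : X, ContinuousOn (fun t => S t (J x)) (Ioi (0 : ℝ)))
    {C : ℝ} (hC : 0 < C)
    (hsmooth : ∀ t : ℝ, 0 < t → t ≤ 1 → ‖S t‖ ≤ C * t ^ (-(3 / 4 : ℝ)))
    {F : X → Y} (hFc : Continuous F) {R B T : ℝ} (hT1 : T ≤ 1)
    (hB : ∀ x, ‖x‖ ≤ R + 1 → ‖F x‖ ≤ B)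
    (hsmall : ∀ t ∈ Ioc 0 T, C * B * (4 * t ^ (1 / 4 : ℝ)) ≤ 1 / 2)
    {u : ℝ → X} (hu : ContinuousOn u (Icc 0 T)) (hu0 : ‖u 0‖ ≤ R)
    (hmild : ∀ t ∈ Ioc (0 : ℝ) T,
      u t = S t (J (u 0)) + ∫ s in (0 : ℝ)..t, S (t - s) (F (u s))) :
    ∀ t ∈ Icc 0 T, ‖u t‖ ≤ R + 1 := by
  by_contra! hcon
  obtain ⟨t₁, ht₁, hbig⟩ := hcon
  have hcompact : IsCompact (Icc 0 T ∩ (fun t => ‖u t‖) ⁻¹' Ici (R + 1)) :=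
    isCompact_Icc.of_isClosed_subset
      (hu.norm.preimage_isClosed_of_isClosed isClosed_Icc isClosed_Ici) inter_subset_left
  -- `τ` is the first time at which the norm is at least `R + 1`.
  obtain ⟨τ, ⟨hτ, hτR⟩, hleast⟩ := hcompact.exists_isLeast ⟨t₁, ht₁, hbig.le⟩
  have hτR' : R + 1 ≤ ‖u τ‖ := hτR
  have hτ0 : 0 < τ := by
    rcases hτ.1.eq_or_lt with h | h
    · rw [← h] at hτR'
      linarith
    · exact h
  have hbefore : ∀ s ∈ Ico 0 τ, ‖u s‖ ≤ R + 1 := by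
    intro s hs
    by_contra! h
    exact absurd (hleast ⟨⟨hs.1, hs.2.le.trans hτ.2⟩, h.le⟩) (not_le.2 hs.2)
  have hcF : ContinuousOn (fun s => F (u s)) (Ico 0 τ) :=
    hFc.comp_continuousOn (hu.mono fun s hs => ⟨hs.1, hs.2.le.trans hτ.2⟩)
  have hint := (norm_duhamel_le J S hsemi hcontr hcont hC hsmooth hτ0 (hτ.2.trans hT1) hcF
    fun s hs => hB _ (hbefore s hs)).2
  have h1 := norm_add_le (S τ (J (u 0))) (∫ s in (0 : ℝ)..τ, S (τ - s) (F (u s)))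
  rw [← hmild τ ⟨hτ0, hτ.2⟩] at h1
  linarith [hcontr τ hτ0 (u 0), hsmall τ ⟨hτ0, hτ.2⟩]

end

/-- Continuous dependence on initial data for mild solutions of
`u(t) = S(t)J u(0) + ∫₀ᵗ S(t-s)F(u(s)) ds`: for every `R > 0` there are `T > 0`
and `c ≥ 1` such that any two mild solutions with initial data of norm `≤ R`
satisfy `max_{0 ≤ t ≤ T} ‖u₁(t) - u₂(t)‖ ≤ c ‖u₁(0) - u₂(0)‖`. -/
theorem abstract_mild_continuous_dependence
    {X Y : Type*}
    [NormedAddCommGroup X] [NormedSpace ℝ X] [CompleteSpace X]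
    [NormedAddCommGroup Y] [NormedSpace ℝ Y] [CompleteSpace Y]
    (J : X →L[ℝ] Y) (S : ℝ → Y →L[ℝ] X)
    (hsemi : ∀ s t : ℝ, 0 < s → 0 < t → ∀ y : Y, S t (J (S s y)) = S (t + s) y)
    (hcontr : ∀ t : ℝ, 0 < t → ∀ x : X, ‖S t (J x)‖ ≤ ‖x‖)
    (hsmooth : ∃ C : ℝ, 0 < C ∧ ∀ t : ℝ, 0 < t → t ≤ 1 →
      ‖S t‖ ≤ C * t ^ (-(3 / 4 : ℝ)))
    (hstrong : ∀ x : X,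
      Tendsto (fun t => S t (J x)) (𝓝[>] (0 : ℝ)) (𝓝 x) ∧
        ContinuousOn (fun t => S t (J x)) (Ioi (0 : ℝ)))
    (F : X → Y)
    (hF : ∀ R : ℝ, 0 < R → ∃ K : ℝ, 0 < K ∧ ∀ x₁ x₂ : X,
      ‖x₁‖ ≤ R → ‖x₂‖ ≤ R → ‖F x₁ - F x₂‖ ≤ K * ‖x₁ - x₂‖) :
    ∀ R : ℝ, 0 < R → ∃ T : ℝ, 0 < T ∧ ∃ c : ℝ, 1 ≤ c ∧
      ∀ u₁ u₂ : ℝ → X,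
        ContinuousOn u₁ (Icc 0 T) → ‖u₁ 0‖ ≤ R →
        (∀ t ∈ Ioc (0 : ℝ) T,
          u₁ t = S t (J (u₁ 0)) + ∫ s in (0 : ℝ)..t, S (t - s) (F (u₁ s))) →
        ContinuousOn u₂ (Icc 0 T) → ‖u₂ 0‖ ≤ R →
        (∀ t ∈ Ioc (0 : ℝ) T,
          u₂ t = S t (J (u₂ 0)) + ∫ s in (0 : ℝ)..t, S (t - s) (F (u₂ s))) →
        ∀ t ∈ Icc (0 : ℝ) T, ‖u₁ t - u₂ t‖ ≤ c * ‖u₁ 0 - u₂ 0‖ := by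
  obtain ⟨C, hC, hsm⟩ := hsmooth
  have hcont := fun x => (hstrong x).2
  have hFc := continuous_of_lipschitz_on_bounded hF
  intro R hR
  obtain ⟨K, hK, hLip⟩ := hF (R + 1) (by linarith)
  have hFB : ∀ x, ‖x‖ ≤ R + 1 → ‖F x‖ ≤ ‖F 0‖ + K * (R + 1) := by
    intro x hx
    have h := hLip x 0 hx (by rw [norm_zero]; linarith)
    rw [sub_zero] at h
    have h2 : K * ‖x‖ ≤ K * (R + 1) := by gcongr
    linarith [norm_le_norm_add_norm_sub' (F x) (F 0)]
  -- `B` bounds both `F` on the ball of radius `R + 1` and its Lipschitz constant there.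
  obtain ⟨B, hBpos, hFB', hKB⟩ : ∃ B, 0 < B ∧ ‖F 0‖ + K * (R + 1) ≤ B ∧ K ≤ B :=
    ⟨‖F 0‖ + K * (R + 1) + K, by positivity, by linarith, by
      have : 0 ≤ ‖F 0‖ + K * (R + 1) := by positivity
      linarith⟩
  -- `T = a ^ 4` with `4 C B a ≤ 1 / 2`.
  obtain ⟨a, ha0, ha1, ha⟩ : ∃ a : ℝ, 0 < a ∧ a ≤ 1 ∧ C * B * (4 * a) ≤ 1 / 2 := by
    refine ⟨min 1 (1 / (8 * (C * B))), by positivity, min_le_left _ _, ?_⟩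
    calc C * B * (4 * min 1 (1 / (8 * (C * B)))) ≤ C * B * (4 * (1 / (8 * (C * B)))) := by
          gcongr
          exact min_le_right _ _
      _ = 1 / 2 := by field_simp; norm_num
  have hT1 : a ^ 4 ≤ 1 := pow_le_one₀ ha0.le ha1
  have hroot : ∀ t ∈ Ioc 0 (a ^ 4), t ^ (1 / 4 : ℝ) ≤ a := by
    intro t ht
    calc t ^ (1 / 4 : ℝ) ≤ (a ^ 4) ^ (1 / 4 : ℝ) :=
          Real.rpow_le_rpow ht.1.le ht.2 (by norm_num)
      _ = a := by
          rw [← Real.rpow_natCast, ← Real.rpow_mul ha0.le]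
          norm_num
  have hsmall : ∀ t ∈ Ioc 0 (a ^ 4), C * B * (4 * t ^ (1 / 4 : ℝ)) ≤ 1 / 2 := by
    intro t ht
    refine le_trans ?_ ha
    have := hroot t ht
    gcongr
  refine ⟨a ^ 4, by positivity, 2, by norm_num, ?_⟩
  intro u₁ u₂ hu₁ hu₁0 hm₁ hu₂ hu₂0 hm₂
  have hb₁ := norm_mild_le J S hsemi hcontr hcont hC hsm hFc hT1
    (fun x hx => (hFB x hx).trans hFB') hsmall hu₁ hu₁0 hm₁
  have hb₂ := norm_mild_le J S hsemi hcontr hcont hC hsm hFc hT1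
    (fun x hx => (hFB x hx).trans hFB') hsmall hu₂ hu₂0 hm₂
  -- `τ` is a time at which the difference of the solutions is largest.
  obtain ⟨τ, hτ, hmax⟩ := isCompact_Icc.exists_isMaxOn
    (nonempty_Icc.2 (by positivity : (0 : ℝ) ≤ a ^ 4)) (hu₁.sub hu₂).norm
  have hmax' : ∀ s ∈ Icc 0 (a ^ 4), ‖u₁ s - u₂ s‖ ≤ ‖u₁ τ - u₂ τ‖ := fun s hs => hmax hs
  suffices h : ‖u₁ τ - u₂ τ‖ ≤ 2 * ‖u₁ 0 - u₂ 0‖ from fun t ht => (hmax' t ht).trans h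
  rcases hτ.1.eq_or_lt with h0 | hτ0
  · rw [← h0]
    linarith [norm_nonneg (u₁ 0 - u₂ 0)]
  have hτ' : τ ∈ Ioc 0 (a ^ 4) := ⟨hτ0, hτ.2⟩
  have hsub : Ico 0 τ ⊆ Icc 0 (a ^ 4) := fun s hs => ⟨hs.1, hs.2.le.trans hτ.2⟩
  have hc₁ : ContinuousOn (fun s => F (u₁ s)) (Ico 0 τ) := hFc.comp_continuousOn (hu₁.mono hsub)
  have hc₂ : ContinuousOn (fun s => F (u₂ s)) (Ico 0 τ) := hFc.comp_continuousOn (hu₂.mono hsub)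
  have hτ1 := hτ.2.trans hT1
  have hi₁ := (norm_duhamel_le J S hsemi hcontr hcont hC hsm hτ0 hτ1 hc₁
    fun s hs => hFB _ (hb₁ s (hsub hs))).1
  have hi₂ := (norm_duhamel_le J S hsemi hcontr hcont hC hsm hτ0 hτ1 hc₂
    fun s hs => hFB _ (hb₂ s (hsub hs))).1
  have hdB : ∀ s ∈ Ico 0 τ, ‖F (u₁ s) - F (u₂ s)‖ ≤ B * ‖u₁ τ - u₂ τ‖ := by
    intro s hs
    refine (hLip _ _ (hb₁ s (hsub hs)) (hb₂ s (hsub hs))).trans ?_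
    have := hmax' s (hsub hs)
    gcongr
  have hd := (norm_duhamel_le J S hsemi hcontr hcont hC hsm hτ0 hτ1
    (g := fun s => F (u₁ s) - F (u₂ s)) (hc₁.sub hc₂) hdB).2
  have heq : u₁ τ - u₂ τ = S τ (J (u₁ 0 - u₂ 0)) +
      ∫ s in (0 : ℝ)..τ, S (τ - s) (F (u₁ s) - F (u₂ s)) := by
    simp only [map_sub]
    rw [intervalIntegral.integral_sub hi₁ hi₂]
    conv_lhs => rw [hm₁ τ hτ', hm₂ τ hτ']
    abel
  have h1 := norm_add_le (S τ (J (u₁ 0 - u₂ 0)))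
    (∫ s in (0 : ℝ)..τ, S (τ - s) (F (u₁ s) - F (u₂ s)))
  rw [← heq] at h1
  have h2 := mul_le_mul_of_nonneg_right (hsmall τ hτ') (norm_nonneg (u₁ τ - u₂ τ))
  have h3 : C * (B * ‖u₁ τ - u₂ τ‖) * (4 * τ ^ (1 / 4 : ℝ)) =
      C * B * (4 * τ ^ (1 / 4 : ℝ)) * ‖u₁ τ - u₂ τ‖ := by ring
  rw [h3] at hd
  linarith [hcontr τ hτ0 (u₁ 0 - u₂ 0)]
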